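/- Let p be a prime with p ≡ 1 (mod 3), and write p = A² + 3B² with integers A, B and A ≡ 1 (mod 3). If 3 ∣ B, then V_p(x² + 4/x) = V_p(x + 2/x²) = (2p − 1 + 2A)/3. If 3 ∤ B, then V_p(x² + 4/x) = V_p(x + 2/x²) = (2p − 1 − A + 3(B/3)B)/3, where (B/3) is the Legendre symbol of B modulo 3. -/

import Mathlib

/-!
Let `χ` be a cubic character of a field with `q` elements. The roots of `X ^ 3 - b * X + c` form a
triple with sum zero and product `-c`, so the number of values of `x ^ 2 + c / x` is determined by
the number of such triples. Scaling a triple by one of its entries turns this into the number `N`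
of `t` with `χ (t * (1 - t)) = χ c`, that is, into the trace `T = 3 * N - q + 2` of a cubic twist of
the Jacobi sum `J(χ, χ)`. The substitution `x ↦ c / x` carries `x + c / x ^ 2` to
`x ^ 2 + c ^ 2 / x`, up to a factor `c`.

Since `J(χ, χ)` has norm `q`, we have `T ^ 2 + 3 * S ^ 2 = 4 * q`. For `q = p = A ^ 2 + 3 * B ^ 2`
and `T ≡ A ≡ 1 (mod 3)` this leaves only `T = -2 * A` and `T = A ± 3 * B`. The involution
`t ↦ 1 - t` gives the parity of `N` and the map `t ↦ (1 - t)⁻¹` of order three gives `N` modulo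
three, hence `T` modulo nine; these congruences decide between the three candidates, and also show
that `χ 2 = 1` if and only if `3 ∣ B`.
-/

open Finset

theorem card_modEq_card_filter_fixed {α : Type*} [DecidableEq α] {p : ℕ} [Fact p.Prime]
    {s : Finset α} {f : α → α} (hf : Set.MapsTo f s s) (hp : ∀ x ∈ s, f^[p] x = x) :
    #s ≡ #{x ∈ s | f x = x} [MOD p] := by
  let g : Function.End s := hf.restrict f s s
  have hg : g ^ p ^ 1 = 1 := by
    rw [pow_one]
    funext x
    exact Subtype.ext ((hf.coe_iterate_restrict x p).trans (hp x x.2))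
  have hfixed : Fintype.card (Function.fixedPoints g) = #{x ∈ s | f x = x} := by
    rw [← Fintype.card_coe]
    exact Fintype.card_congr
      { toFun x := ⟨x.1, mem_filter.mpr ⟨x.1.2, congrArg Subtype.val x.2⟩⟩
        invFun x := ⟨⟨x, (mem_filter.mp x.2).1⟩, Subtype.ext (mem_filter.mp x.2).2⟩ }
  simpa only [Fintype.card_coe, hfixed] using Equiv.Perm.card_fixedPoints_modEq hg

theorem sum_nthRootsFinset_one {R M : Type*} [CommRing R] [IsDomain R] [AddCommMonoid M] {n : ℕ}
    [NeZero n] {ω ζ : R} (hω : IsPrimitiveRoot ω n) (hζ : ζ ^ n = 1) (f : R → M) :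
    ∑ z ∈ Polynomial.nthRootsFinset n (1 : R), f z = ∑ k ∈ range n, f (ζ * ω ^ k) := by
  have hn : 0 < n := NeZero.pos n
  have hζ₀ : ζ ≠ 0 := by
    rintro rfl
    exact zero_ne_one ((zero_pow hn.ne').symm.trans hζ)
  symm
  refine sum_nbij (fun k => ζ * ω ^ k) (fun k _ => ?_) (fun i hi j hj h => ?_) (fun z hz => ?_)
    fun _ _ => rfl
  · rw [Polynomial.mem_nthRootsFinset hn, mul_pow, pow_right_comm, hω.pow_eq_one, hζ, one_pow,
      one_mul]
  · exact hω.pow_inj (mem_range.mp hi) (mem_range.mp hj) (mul_left_cancel₀ hζ₀ h)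
  · rw [mem_coe, Polynomial.mem_nthRootsFinset hn] at hz
    obtain ⟨k, hk, hωk⟩ := hω.eq_pow_of_pow_eq_one (ξ := z * ζ ^ (n - 1))
      (by rw [mul_pow, pow_right_comm, hz, hζ, one_pow, one_mul])
    refine ⟨k, mem_coe.mpr (mem_range.mpr hk), ?_⟩
    dsimp only
    rw [hωk, mul_left_comm, mul_pow_sub_one hn.ne', hζ, mul_one]

theorem zero_notMem_nthRootsFinset_one {R : Type*} [CommRing R] [IsDomain R] {n : ℕ} (hn : 0 < n) :
    (0 : R) ∉ Polynomial.nthRootsFinset n (1 : R) := by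
  rw [Polynomial.mem_nthRootsFinset hn, zero_pow hn.ne']
  exact zero_ne_one

/-! ### Multiplicative characters -/

section MulChar

variable {F R : Type*} [Field F] [CommRing R]

theorem mulChar_apply_pow_orderOf [Finite F] (χ : MulChar F R) {a : F} (ha : a ≠ 0) :
    χ a ^ orderOf χ = 1 := by
  rw [← MulChar.pow_apply' χ χ.orderOf_pos.ne', pow_orderOf_eq_one,
    MulChar.one_apply (isUnit_iff_ne_zero.mpr ha)]

theorem mulChar_apply_eq_zero_iff [Nontrivial R] {χ : MulChar F R} {a : F} : χ a = 0 ↔ a = 0 := by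
  rw [MulChar.apply_eq_zero_iff, isUnit_iff_ne_zero, not_not]

theorem mulChar_apply_mem_insert_nthRootsFinset [Finite F] [IsDomain R] [DecidableEq R]
    (χ : MulChar F R) (a : F) :
    χ a ∈ insert 0 (Polynomial.nthRootsFinset (orderOf χ) (1 : R)) := by
  rw [mem_insert, Polynomial.mem_nthRootsFinset χ.orderOf_pos]
  exact (eq_or_ne a 0).imp (by rintro rfl; exact χ.map_zero) (mulChar_apply_pow_orderOf χ)

theorem exists_pow_orderOf_eq_of_mulChar_apply_eq_one [Finite F] [Nontrivial R] (χ : MulChar F R)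
    {a : F} (ha : χ a = 1) : ∃ x, x ^ orderOf χ = a := by
  have ha₀ : a ≠ 0 := mulChar_apply_eq_zero_iff.not.mp (ha ▸ one_ne_zero)
  obtain ⟨g, hg⟩ := IsCyclic.exists_generator (α := Fˣ)
  have hdvd (k : ℕ) (hk : χ g ^ k = 1) : orderOf χ ∣ k := by
    rw [orderOf_dvd_iff_pow_eq_one, MulChar.eq_iff hg]
    simpa only [MulChar.pow_apply_coe, MulChar.one_apply_coe] using hk
  obtain ⟨k, hk⟩ := mem_powers_iff_mem_zpowers.mpr (hg (Units.mk0 a ha₀))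
  have hgk : (g : F) ^ k = a := by simpa using congrArg Units.val hk
  obtain ⟨m, rfl⟩ := hdvd k (by rw [← map_pow, hgk, ha])
  exact ⟨g ^ m, by rw [← pow_mul, mul_comm, hgk]⟩

theorem exists_isPrimitiveRoot_of_dvd_card_sub_one [Fintype F] {n : ℕ}
    (h : n ∣ Fintype.card F - 1) : ∃ ζ : F, IsPrimitiveRoot ζ n := by
  classical
  obtain ⟨g, hg⟩ := IsCyclic.exists_ofOrder_eq_natCard (α := Fˣ)
  have hg' : IsPrimitiveRoot (g : F) (Fintype.card F - 1) := by
    rw [← Fintype.card_units, ← Nat.card_eq_fintype_card, ← hg, IsPrimitiveRoot.coe_units_iff]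
    exact IsPrimitiveRoot.orderOf g
  obtain ⟨m, hm⟩ := h
  exact ⟨_, hg'.pow (Nat.sub_pos_of_lt Fintype.one_lt_card) (hm.trans (mul_comm n m))⟩

theorem card_filter_pow_orderOf_eq [Fintype F] [DecidableEq F] [IsDomain R] (χ : MulChar F R)
    {a : F} (ha : χ a = 1) : #{x : F | x ^ orderOf χ = a} = orderOf χ := by
  have ha₀ : a ≠ 0 := mulChar_apply_eq_zero_iff.not.mp (ha ▸ one_ne_zero)
  obtain ⟨ζ, hζ⟩ := exists_isPrimitiveRoot_of_dvd_card_sub_one χ.orderOf_dvd_card_sub_one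
  have hroots : ({x : F | x ^ orderOf χ = a} : Finset F) =
      (Polynomial.nthRoots (orderOf χ) a).toFinset := by
    ext x
    simp [Polynomial.mem_nthRoots χ.orderOf_pos]
  rw [hroots, Multiset.toFinset_card_of_nodup (hζ.nthRoots_nodup ha₀), hζ.card_nthRoots,
    if_pos (exists_pow_orderOf_eq_of_mulChar_apply_eq_one χ ha)]

theorem exists_isPrimitiveRoot_of_orderOf_mulChar [Finite F] [IsDomain R] {χ : MulChar F R} {p : ℕ}
    [Fact p.Prime] (hχ : orderOf χ = p) : ∃ ω : R, IsPrimitiveRoot ω p := by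
  have hne : χ ≠ 1 := by
    rintro rfl
    exact Nat.Prime.ne_one Fact.out (hχ ▸ orderOf_one)
  obtain ⟨g, hg⟩ := MulChar.ne_one_iff.mp hne
  have hpow : χ g ^ p = 1 := hχ ▸ mulChar_apply_pow_orderOf χ g.ne_zero
  exact ⟨χ g, orderOf_eq_prime hpow hg ▸ IsPrimitiveRoot.orderOf (χ g)⟩

theorem cubicChar_mul_pow_three [Finite F] {χ : MulChar F R} (hχ : orderOf χ = 3) (a : F) {x : F}
    (hx : x ≠ 0) : χ (a * x ^ 3) = χ a := by
  rw [map_mul, map_pow, ← hχ, mulChar_apply_pow_orderOf χ hx, mul_one]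

theorem cubicChar_neg [Finite F] {χ : MulChar F R} (hχ : orderOf χ = 3) (a : F) :
    χ (-a) = χ a := by
  rw [← cubicChar_mul_pow_three hχ a (neg_ne_zero.mpr one_ne_zero)]
  congr 1
  ring

end MulChar

theorem card_filter_mul_one_sub_eq_one {F : Type*} [Field F] [Fintype F] [DecidableEq F] {ρ : F}
    (hρ : IsPrimitiveRoot ρ 3) : #{t : F | t * (1 - t) = 1} = 2 := by
  have hsum : ρ ^ 2 + ρ + 1 = 0 := by
    have := hρ.geom_sum_eq_zero (by norm_num)
    simp only [sum_range_succ, sum_range_zero] at this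
    linear_combination this
  have hne : -ρ ≠ -ρ ^ 2 := by
    rw [Ne, neg_inj, eq_comm, sq, mul_eq_left₀ (hρ.ne_zero (by norm_num))]
    exact hρ.ne_one (by norm_num)
  rw [← card_pair hne]
  congr 1
  ext t
  have hfactor : t * (1 - t) - 1 = -((t - -ρ) * (t - -ρ ^ 2)) := by
    linear_combination (t + ρ - 1) * hsum
  rw [mem_filter_univ, ← sub_eq_zero, hfactor, neg_eq_zero, mul_eq_zero, sub_eq_zero, sub_eq_zero,
    mem_insert, mem_singleton]

theorem three_ne_zero_of_orderOf_mulChar {F R : Type*} [Field F] [Finite F] [CommRing R]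
    {χ : MulChar F R} (hχ : orderOf χ = 3) : (3 : F) ≠ 0 := by
  have := Fintype.ofFinite F
  intro h
  obtain ⟨k, hk⟩ : 3 ∣ Fintype.card F - 1 := hχ ▸ χ.orderOf_dvd_card_sub_one
  have hq : Fintype.card F = 3 * k + 1 := by
    have := Fintype.card_pos (α := F)
    omega
  have hzero := Nat.cast_card_eq_zero F
  rw [hq] at hzero
  push_cast at hzero
  rw [h, zero_mul, zero_add] at hzero
  exact one_ne_zero hzero

theorem jacobiSum_self_mul_inv_of_orderOf_eq_three {F K : Type*} [Field F] [Fintype F]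
    [Field K] [CharZero K] {χ : MulChar F K} (hχ : orderOf χ = 3) :
    jacobiSum χ χ * jacobiSum χ⁻¹ χ⁻¹ = Fintype.card F := by
  have hchar : ringChar K ≠ ringChar F := by
    rw [ringChar.eq_zero]
    exact (CharP.ringChar_ne_zero_of_finite F).symm
  have hχ₁ : χ ≠ 1 := by
    rintro rfl
    simp at hχ
  have hχ₂ : χ ^ 2 ≠ 1 := pow_ne_one_of_lt_orderOf two_ne_zero (by omega)
  exact jacobiSum_mul_jacobiSum_inv hchar hχ₁ hχ₁ (sq χ ▸ hχ₂)

/-! ### Level sets of the Jacobi sum -/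

section JacobiLevel

variable {F R : Type*} [Field F] [Fintype F] [CommRing R] [DecidableEq R]

/-- The level set of `t ↦ χ (t (1 - t))`, the summand of the Jacobi sum `J(χ, χ)`, at `ζ`. -/
def jacobiLevel (χ : MulChar F R) (ζ : R) : Finset F := {t | χ (t * (1 - t)) = ζ}

variable {χ : MulChar F R} {ζ : R} {t : F}

theorem mem_jacobiLevel : t ∈ jacobiLevel χ ζ ↔ χ (t * (1 - t)) = ζ := by
  simp only [jacobiLevel, mem_filter_univ]

theorem mul_one_sub_ne_zero_of_mem_jacobiLevel (hζ : ζ ≠ 0) (ht : t ∈ jacobiLevel χ ζ) :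
    t * (1 - t) ≠ 0 := by
  rw [mem_jacobiLevel] at ht
  rintro h
  exact hζ (ht.symm.trans (h ▸ χ.map_zero))

theorem one_sub_mem_jacobiLevel (ht : t ∈ jacobiLevel χ ζ) : 1 - t ∈ jacobiLevel χ ζ := by
  rw [mem_jacobiLevel] at ht ⊢
  rw [← ht]
  congr 1
  ring

theorem inv_one_sub_mem_jacobiLevel (hχ : orderOf χ = 3) (hζ : ζ ≠ 0) (ht : t ∈ jacobiLevel χ ζ) :
    (1 - t)⁻¹ ∈ jacobiLevel χ ζ := by
  have ht₁ := right_ne_zero_of_mul (mul_one_sub_ne_zero_of_mem_jacobiLevel hζ ht)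
  have hcube : (1 - t)⁻¹ * (1 - (1 - t)⁻¹) = -(t * (1 - t)) * (1 - t)⁻¹ ^ 3 := by
    field_simp
    ring
  rw [mem_jacobiLevel] at ht ⊢
  rw [hcube, cubicChar_mul_pow_three hχ _ (inv_ne_zero ht₁), cubicChar_neg hχ, ht]

theorem odd_card_jacobiLevel_iff (hχ : orderOf χ = 3) (h2 : (2 : F) ≠ 0) :
    Odd #(jacobiLevel χ ζ) ↔ ζ = χ 2 := by
  let _ : DecidableEq F := Classical.decEq F
  have hmaps : Set.MapsTo (1 - ·) (jacobiLevel χ ζ : Set F) (jacobiLevel χ ζ) :=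
    fun _ => one_sub_mem_jacobiLevel
  have hinvol : ∀ t ∈ jacobiLevel χ ζ, (1 - ·)^[2] t = t := fun t _ => sub_sub_cancel 1 t
  have hfixed : ∀ t : F, 1 - t = t ↔ t = 2⁻¹ := fun t => by
    rw [← mul_eq_one_iff_eq_inv₀ h2]
    constructor <;> intro h <;> linear_combination -h
  have hhalf : χ (2⁻¹ * (1 - 2⁻¹)) = χ 2 := by
    rw [← cubicChar_mul_pow_three hχ 2 (inv_ne_zero h2)]
    congr 1
    field_simp
    norm_num
  have hcard : #{t ∈ jacobiLevel χ ζ | 1 - t = t} = if ζ = χ 2 then 1 else 0 := by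
    rw [filter_congr fun t _ => hfixed t, filter_eq', apply_ite card, card_singleton, card_empty]
    simp only [mem_jacobiLevel, hhalf, eq_comm]
  have hmod := card_modEq_card_filter_fixed hmaps hinvol
  rw [hcard, Nat.ModEq] at hmod
  rw [Nat.odd_iff, hmod]
  split_ifs with h <;> simp [h]

theorem card_jacobiLevel_modEq_three (hχ : orderOf χ = 3) (hζ : ζ ≠ 0) :
    #(jacobiLevel χ ζ) ≡ if ζ = 1 then 2 else 0 [MOD 3] := by
  classical
  have hne {t : F} (ht : t ∈ jacobiLevel χ ζ) : t ≠ 0 ∧ 1 - t ≠ 0 :=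
    mul_ne_zero_iff.mp (mul_one_sub_ne_zero_of_mem_jacobiLevel hζ ht)
  have hmaps : Set.MapsTo (fun t => (1 - t)⁻¹) (jacobiLevel χ ζ : Set F) (jacobiLevel χ ζ) :=
    fun _ => inv_one_sub_mem_jacobiLevel hχ hζ
  have hcycle : ∀ t ∈ jacobiLevel χ ζ, (fun t => (1 - t)⁻¹)^[3] t = t := by
    intro t ht
    obtain ⟨ht₀, ht₁⟩ := hne ht
    have hsecond : 1 - (1 - t)⁻¹ = -t / (1 - t) := by
      field_simp
      ring
    simp only [Function.iterate_succ, Function.iterate_zero, Function.comp_apply, id_eq, hsecond]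
    field_simp
    ring
  have hfixed : ∀ t ∈ jacobiLevel χ ζ, ((1 - t)⁻¹ = t ↔ t * (1 - t) = 1) := fun t ht => by
    rw [eq_comm, ← mul_eq_one_iff_eq_inv₀ (hne ht).2]
  have hcard : #{t ∈ jacobiLevel χ ζ | (1 - t)⁻¹ = t} = if ζ = 1 then 2 else 0 := by
    rw [filter_congr hfixed]
    split_ifs with h
    · obtain ⟨ρ, hρ⟩ :=
        exists_isPrimitiveRoot_of_dvd_card_sub_one (hχ ▸ χ.orderOf_dvd_card_sub_one)
      rw [← card_filter_mul_one_sub_eq_one hρ]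
      congr 1
      ext t
      rw [mem_filter, mem_filter_univ, mem_jacobiLevel]
      exact and_iff_right_of_imp fun ht => by rw [ht, map_one, h]
    · rw [card_eq_zero, filter_eq_empty_iff]
      intro t ht ht'
      rw [mem_jacobiLevel, ht', map_one] at ht
      exact h ht.symm
  exact hcard ▸ card_modEq_card_filter_fixed hmaps hcycle

theorem sum_card_jacobiLevel_smul [IsDomain R] {M : Type*} [AddCommMonoid M] (χ : MulChar F R)
    {f : R → M} (hf : f 0 = 0) :
    ∑ z ∈ Polynomial.nthRootsFinset (orderOf χ) (1 : R), #(jacobiLevel χ z) • f z =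
      ∑ t, f (χ (t * (1 - t))) := by
  rw [← sum_fiberwise_of_maps_to fun t _ => mulChar_apply_mem_insert_nthRootsFinset χ (t * (1 - t)),
    sum_insert (zero_notMem_nthRootsFinset_one χ.orderOf_pos)]
  have hfiber (z : R) :
      ∑ t with χ (t * (1 - t)) = z, f (χ (t * (1 - t))) = #(jacobiLevel χ z) • f z :=
    sum_eq_card_nsmul fun t ht => by rw [(mem_filter.mp ht).2]
  simp only [hfiber, hf, smul_zero, zero_add]

theorem card_jacobiLevel_zero [Nontrivial R] : #(jacobiLevel χ 0) = 2 := by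
  classical
  rw [← card_pair (zero_ne_one (α := F))]
  congr 1
  ext t
  rw [mem_jacobiLevel, mulChar_apply_eq_zero_iff, mul_eq_zero, sub_eq_zero, eq_comm (a := 1),
    mem_insert, mem_singleton]

theorem sum_card_jacobiLevel_add_two [IsDomain R] (χ : MulChar F R) :
    ∑ z ∈ Polynomial.nthRootsFinset (orderOf χ) (1 : R), #(jacobiLevel χ z) + 2 =
      Fintype.card F := by
  rw [← card_univ, card_eq_sum_card_fiberwise fun t _ =>
      mulChar_apply_mem_insert_nthRootsFinset χ (t * (1 - t)),
    sum_insert (zero_notMem_nthRootsFinset_one χ.orderOf_pos), add_comm]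
  exact congrArg (· + _) card_jacobiLevel_zero.symm

theorem jacobiSum_self_eq_sum [IsDomain R] (χ : MulChar F R) :
    jacobiSum χ χ =
      ∑ z ∈ Polynomial.nthRootsFinset (orderOf χ) (1 : R), #(jacobiLevel χ z) • z := by
  simp only [sum_card_jacobiLevel_smul χ (f := fun z => z) rfl, jacobiSum, map_mul]

/-- The trace `ζ⁻¹ J(χ, χ) + ζ J(χ⁻¹, χ⁻¹)` for a cubic character `χ` of a field with `q` elements
and `ζ ^ 3 = 1`, expressed through the number of `t` with `χ (t (1 - t)) = ζ`. -/
def jacobiTrace (χ : MulChar F R) (ζ : R) : ℤ :=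
  3 * #(jacobiLevel χ ζ) - Fintype.card F + 2

theorem even_jacobiTrace_iff (hχ : orderOf χ = 3) (h2 : (2 : F) ≠ 0) :
    Even (jacobiTrace χ ζ) ↔ ζ = χ 2 := by
  have hchar : ringChar F ≠ 2 := fun h =>
    h2 (by simpa [h] using ringChar.Nat.cast_ringChar (R := F))
  have hq : Fintype.card F % 2 = 1 := FiniteField.odd_card_of_char_ne_two hchar
  rw [← odd_card_jacobiLevel_iff hχ h2, Int.even_iff, Nat.odd_iff, jacobiTrace]
  omega

theorem jacobiTrace_modEq_nine (hχ : orderOf χ = 3) (hζ : ζ ≠ 0) :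
    jacobiTrace χ ζ ≡ (if ζ = 1 then 8 else 2) - Fintype.card F [ZMOD 9] := by
  have hmod := card_jacobiLevel_modEq_three hχ hζ
  rw [jacobiTrace, Int.ModEq]
  rw [Nat.ModEq] at hmod
  split_ifs at hmod ⊢ <;> omega

section Norm

variable {K : Type*} [Field K] [DecidableEq K] {χ : MulChar F K} {ζ ω : K}

theorem jacobiSum_inv_self_eq_sum (χ : MulChar F K) :
    jacobiSum χ⁻¹ χ⁻¹ =
      ∑ z ∈ Polynomial.nthRootsFinset (orderOf χ) (1 : K), #(jacobiLevel χ z) • z⁻¹ := by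
  simp only [sum_card_jacobiLevel_smul χ inv_zero, jacobiSum, MulChar.inv_apply_eq_inv', map_mul,
    mul_inv]

theorem card_jacobiLevel_norm_eq [CharZero K] (hχ : orderOf χ = 3) (hω : IsPrimitiveRoot ω 3)
    (hζ : ζ ^ 3 = 1) {a b c : ℕ} (ha : #(jacobiLevel χ ζ) = a) (hb : #(jacobiLevel χ (ζ * ω)) = b)
    (hc : #(jacobiLevel χ (ζ * ω ^ 2)) = c) :
    (a ^ 2 + b ^ 2 + c ^ 2 - a * b - b * c - a * c : ℤ) = Fintype.card F := by
  have hζ₀ : ζ * ζ⁻¹ = 1 := mul_inv_cancel₀ (by rintro rfl; norm_num at hζ)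
  have hsum : 1 + ω + ω ^ 2 = 0 := by
    simpa [sum_range_succ] using hω.geom_sum_eq_zero (by norm_num)
  have hinv : ω⁻¹ = ω ^ 2 := inv_eq_of_mul_eq_one_right (by rw [← pow_succ', hω.pow_eq_one])
  have hmul := jacobiSum_self_mul_inv_of_orderOf_eq_three hχ
  rw [jacobiSum_self_eq_sum, jacobiSum_inv_self_eq_sum, hχ, sum_nthRootsFinset_one hω hζ,
    sum_nthRootsFinset_one hω hζ] at hmul
  simp only [sum_range_succ, sum_range_zero, zero_add, pow_zero, pow_one, mul_one, nsmul_eq_mul,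
    mul_inv, ← inv_pow, hinv, ha, hb, hc] at hmul
  have hcast : (a ^ 2 + b ^ 2 + c ^ 2 - a * b - b * c - a * c : K) = Fintype.card F := by
    rw [← hmul]
    linear_combination
      -(a + b * ω + c * ω ^ 2) * (a + b * ω ^ 2 + c * ω ^ 4) * hζ₀ - (b ^ 2 * (ω - 1) +
        c ^ 2 * (ω - 1) * (ω ^ 3 + 1) + a * b + a * c * (ω ^ 2 - ω + 1) +
        b * c * (ω ^ 3 - ω + 1)) * hsum
  exact_mod_cast hcast

theorem exists_jacobiTrace_sq_add [CharZero K] (hχ : orderOf χ = 3) (hζ : ζ ^ 3 = 1) :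
    ∃ S : ℤ, jacobiTrace χ ζ ^ 2 + 3 * S ^ 2 = 4 * Fintype.card F := by
  have : Fact (Nat.Prime 3) := ⟨Nat.prime_three⟩
  obtain ⟨ω, hω⟩ := exists_isPrimitiveRoot_of_orderOf_mulChar hχ
  have hnorm := card_jacobiLevel_norm_eq hχ hω hζ rfl rfl rfl
  have htotal := sum_card_jacobiLevel_add_two χ
  rw [hχ, sum_nthRootsFinset_one hω hζ] at htotal
  simp only [sum_range_succ, sum_range_zero, zero_add, pow_zero, pow_one, mul_one] at htotal
  set a := #(jacobiLevel χ ζ) with ha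
  set b := #(jacobiLevel χ (ζ * ω))
  set c := #(jacobiLevel χ (ζ * ω ^ 2))
  have htrace : jacobiTrace χ ζ = 2 * a - b - c := by
    rw [jacobiTrace, ← ha, ← htotal]
    push_cast
    ring
  exact ⟨b - c, by rw [htrace]; linear_combination 4 * hnorm⟩

end Norm

end JacobiLevel

/-! ### Zero-sum triples and value sets -/

section ZeroSumPairs

variable {F : Type*} [Field F] [Fintype F] [DecidableEq F] {b c t x y : F}

/-- The pairs `(x, y)` such that the zero-sum triple `x, y, -(x + y)` has product `-c`. -/
def zeroSumPairs (c : F) : Finset (F × F) := {q | q.1 * q.2 * (q.1 + q.2) = c}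

theorem mem_zeroSumPairs : (x, y) ∈ zeroSumPairs c ↔ x * y * (x + y) = c := by
  simp only [zeroSumPairs, mem_filter_univ]

theorem ne_zero_of_mem_zeroSumPairs (hc : c ≠ 0) (h : (x, y) ∈ zeroSumPairs c) : x ≠ 0 := by
  rintro rfl
  exact hc (by rw [← mem_zeroSumPairs.mp h, zero_mul, zero_mul])

theorem card_zeroSumPairs_fiber {R : Type*} [CommRing R] [IsDomain R] {χ : MulChar F R}
    (hχ : orderOf χ = 3) (hc : c ≠ 0) (ht : χ (t * (1 - t)) = χ c) :
    #{q ∈ zeroSumPairs c | -q.2 / q.1 = t} = 3 := by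
  have hχc : χ c ≠ 0 := mulChar_apply_eq_zero_iff.not.mpr hc
  have ht₀ : t * (1 - t) ≠ 0 := mulChar_apply_eq_zero_iff.not.mp (ht ▸ hχc)
  have hroot (x : F) : x ^ 3 = -c / (t * (1 - t)) ↔ (x, -t * x) ∈ zeroSumPairs c := by
    rw [mem_zeroSumPairs, eq_div_iff ht₀]
    constructor <;> intro h <;> linear_combination -h
  have hfiber {x y : F} (h : (x, y) ∈ zeroSumPairs c) : -y / x = t ↔ y = -t * x := by
    rw [div_eq_iff (ne_zero_of_mem_zeroSumPairs hc h), neg_eq_iff_eq_neg, neg_mul]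
  have hone : χ (-c / (t * (1 - t))) = 1 := by
    have hmul : χ (-c / (t * (1 - t))) * χ c = χ c := by
      rw [← ht, ← map_mul, div_mul_cancel₀ _ ht₀, cubicChar_neg hχ, ht]
    exact (mul_eq_right₀ hχc).mp hmul
  have hcard := card_filter_pow_orderOf_eq χ hone
  rw [hχ] at hcard
  rw [← hcard]
  refine card_nbij' Prod.fst (fun x => (x, -t * x)) ?_ ?_ ?_ fun _ _ => rfl
  · rintro ⟨x, y⟩ h
    obtain ⟨hxy, ht⟩ := mem_filter.mp h
    rw [mem_coe, mem_filter_univ, hroot, ← (hfiber hxy).mp ht]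
    exact hxy
  · intro x hx
    rw [mem_coe, mem_filter_univ, hroot] at hx
    exact mem_filter.mpr ⟨hx, (hfiber hx).mpr rfl⟩
  · rintro ⟨x, y⟩ h
    obtain ⟨hxy, ht⟩ := mem_filter.mp h
    exact Prod.ext rfl ((hfiber hxy).mp ht).symm

theorem card_zeroSumPairs {R : Type*} [CommRing R] [IsDomain R] [DecidableEq R] {χ : MulChar F R}
    (hχ : orderOf χ = 3) (hc : c ≠ 0) : #(zeroSumPairs c) = 3 * #(jacobiLevel χ (χ c)) := by
  have hmaps : ∀ q ∈ zeroSumPairs c, -q.2 / q.1 ∈ jacobiLevel χ (χ c) := by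
    rintro ⟨x, y⟩ h
    have hx := ne_zero_of_mem_zeroSumPairs hc h
    have hcube : -y / x * (1 - -y / x) = -c * x⁻¹ ^ 3 := by
      rw [← mem_zeroSumPairs.mp h]
      field_simp
      ring
    rw [mem_jacobiLevel, hcube, cubicChar_mul_pow_three hχ _ (inv_ne_zero hx), cubicChar_neg hχ]
  rw [card_eq_sum_card_fiberwise hmaps,
    sum_const_nat fun t ht => card_zeroSumPairs_fiber hχ hc (mem_jacobiLevel.mp ht), mul_comm]

theorem cubic_root_iff {R : Type*} [CommRing R] [IsDomain R] [DecidableEq R] {c x y u : R}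
    (h : x * y * (x + y) = c) :
    u ^ 3 + c = (x ^ 2 + x * y + y ^ 2) * u ↔ u ∈ ({x, y, -(x + y)} : Finset R) := by
  have hfactor :
      u ^ 3 + c - (x ^ 2 + x * y + y ^ 2) * u = (u - x) * ((u - y) * (u - -(x + y))) := by
    linear_combination -h
  rw [← sub_eq_zero, hfactor]
  simp only [mul_eq_zero, sub_eq_zero, mem_insert, mem_singleton]

theorem card_ordered_pairs_of_not_all_eq {α : Type*} [DecidableEq α] {x y z : α}
    (h : ¬(x = y ∧ y = z)) :
    3 + #{(x, y), (x, z), (y, x), (y, z), (z, x), (z, y)} = 3 * #{x, y, z} := by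
  by_cases hxy : x = y <;> by_cases hyz : y = z <;> by_cases hxz : x = z <;>
    simp_all [eq_comm]

theorem zeroSumPairs_fiber_eq (h : (x, y) ∈ zeroSumPairs c) :
    {q ∈ zeroSumPairs c | q.1 ^ 2 + q.1 * q.2 + q.2 ^ 2 = x ^ 2 + x * y + y ^ 2} =
      {(x, y), (x, -(x + y)), (y, x), (y, -(x + y)), (-(x + y), x), (-(x + y), y)} := by
  rw [mem_zeroSumPairs] at h
  ext ⟨u, v⟩
  rw [mem_filter, mem_zeroSumPairs]
  simp only [mem_insert, mem_singleton, Prod.mk.injEq]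
  constructor
  · rintro ⟨huv, hb⟩
    have hu : u ∈ ({x, y, -(x + y)} : Finset F) :=
      (cubic_root_iff h).mp (by rw [← hb, ← huv]; ring)
    simp only [mem_insert, mem_singleton] at hu
    rcases hu with rfl | rfl | rfl
    · have hv : (v - y) * (v - -(u + y)) = 0 := by linear_combination hb
      rw [mul_eq_zero, sub_eq_zero, sub_eq_zero] at hv
      tauto
    · have hv : (v - x) * (v - -(x + u)) = 0 := by linear_combination hb
      rw [mul_eq_zero, sub_eq_zero, sub_eq_zero] at hv
      tauto
    · have hv : (v - x) * (v - y) = 0 := by linear_combination hb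
      rw [mul_eq_zero, sub_eq_zero, sub_eq_zero] at hv
      tauto
  · rintro (⟨rfl, rfl⟩ | ⟨rfl, rfl⟩ | ⟨rfl, rfl⟩ | ⟨rfl, rfl⟩ | ⟨rfl, rfl⟩ | ⟨rfl, rfl⟩) <;>
      exact ⟨by linear_combination h, by ring⟩

/-- The values of `x ^ 2 + c / x` at nonzero `x`. -/
def sqAddDivValues (c : F) : Finset F := (univ.erase 0).image fun x => x ^ 2 + c / x

theorem mem_sqAddDivValues : b ∈ sqAddDivValues c ↔ ∃ x ≠ 0, x ^ 3 + c = b * x := by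
  simp only [sqAddDivValues, mem_image, mem_erase, mem_univ, and_true]
  refine exists_congr fun x => and_congr_right fun hx => ?_
  rw [← mul_left_inj' hx, add_mul, div_mul_cancel₀ _ hx, ← pow_succ]

/-- The values of `x + c / x ^ 2` at nonzero `x`. -/
def addDivSqValues (c : F) : Finset F := (univ.erase 0).image fun x => x + c / x ^ 2

theorem mem_addDivSqValues : b ∈ addDivSqValues c ↔ ∃ x ≠ 0, x ^ 3 + c = b * x ^ 2 := by
  simp only [addDivSqValues, mem_image, mem_erase, mem_univ, and_true]
  refine exists_congr fun x => and_congr_right fun hx => ?_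
  have hx₂ := pow_ne_zero 2 hx
  rw [← mul_left_inj' hx₂, add_mul, div_mul_cancel₀ _ hx₂, ← pow_succ']

theorem card_addDivSqValues (hc : c ≠ 0) : #(addDivSqValues c) = #(sqAddDivValues (c ^ 2)) := by
  rw [← card_image_of_injective (addDivSqValues c) (mul_right_injective₀ hc)]
  have hsubst {x : F} (hx : x ≠ 0) : (c / x) ^ 2 + c ^ 2 / (c / x) = c * (x + c / x ^ 2) := by
    field_simp
    ring
  congr 1
  ext b
  simp only [addDivSqValues, sqAddDivValues, image_image, mem_image, mem_erase, mem_univ, and_true,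
    Function.comp_apply]
  constructor
  · rintro ⟨x, hx, rfl⟩
    exact ⟨c / x, div_ne_zero hc hx, hsubst hx⟩
  · rintro ⟨x, hx, rfl⟩
    exact ⟨c / x, div_ne_zero hc hx, by rw [← hsubst (div_ne_zero hc hx), div_div_cancel₀ hc]⟩

theorem filter_sq_add_div_eq (hc : c ≠ 0) :
    {x ∈ univ.erase (0 : F) | x ^ 2 + c / x = b} = ({x | x ^ 3 + c = b * x} : Finset F) := by
  ext x
  rw [mem_filter, mem_erase, mem_filter_univ]
  constructor
  · rintro ⟨⟨hx, -⟩, rfl⟩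
    field_simp
  · intro h
    have hx : x ≠ 0 := by
      rintro rfl
      exact hc (by simpa using h)
    refine ⟨⟨hx, mem_univ x⟩, ?_⟩
    field_simp
    rw [h, mul_comm]

theorem mem_filter_zeroSumPairs_of_ne (hne : x ≠ y) (hx : x ^ 3 + c = b * x)
    (hy : y ^ 3 + c = b * y) :
    (x, y) ∈ {q ∈ zeroSumPairs c | q.1 ^ 2 + q.1 * q.2 + q.2 ^ 2 = b} := by
  have hb : x ^ 2 + x * y + y ^ 2 = b :=
    mul_left_cancel₀ (sub_ne_zero.mpr hne) (by linear_combination hx - hy)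
  exact mem_filter.mpr ⟨mem_zeroSumPairs.mpr (by linear_combination x * hb - hx), hb⟩

-- The cubic `X ^ 3 - b * X + c` has one, two or three distinct roots; correspondingly there are
-- none, three or six zero-sum pairs of roots.
theorem card_zeroSumPairs_value_fiber (hc : c ≠ 0) (h3 : (3 : F) ≠ 0) (hb : b ∈ sqAddDivValues c) :
    3 + #{q ∈ zeroSumPairs c | q.1 ^ 2 + q.1 * q.2 + q.2 ^ 2 = b} =
      3 * #{x ∈ (univ : Finset F).erase 0 | x ^ 2 + c / x = b} := by
  rw [filter_sq_add_div_eq hc]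
  rcases eq_empty_or_nonempty {q ∈ zeroSumPairs c | q.1 ^ 2 + q.1 * q.2 + q.2 ^ 2 = b} with
    hempty | ⟨⟨x, y⟩, hxy⟩
  · have hunique : #{x | x ^ 3 + c = b * x} = 1 := by
      obtain ⟨x, hx, hxb⟩ := mem_image.mp hb
      have hxroot : x ∈ ({x | x ^ 3 + c = b * x} : Finset F) :=
        filter_sq_add_div_eq hc ▸ mem_filter.mpr ⟨hx, hxb⟩
      refine card_eq_one.mpr ⟨x, eq_singleton_iff_unique_mem.mpr ⟨hxroot, fun u hu => ?_⟩⟩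
      rw [mem_filter_univ] at hxroot hu
      by_contra hne
      have hpair := mem_filter_zeroSumPairs_of_ne hne hu hxroot
      exact notMem_empty _ (hempty ▸ hpair)
    rw [hempty, hunique, card_empty]
  · obtain ⟨h, rfl⟩ := mem_filter.mp hxy
    have hroots : ({u | u ^ 3 + c = (x ^ 2 + x * y + y ^ 2) * u} : Finset F) =
        {x, y, -(x + y)} := by
      ext u
      rw [mem_filter_univ, cubic_root_iff (mem_zeroSumPairs.mp h)]
    have hne : ¬(x = y ∧ y = -(x + y)) := by
      rintro ⟨rfl, hx⟩
      have : 3 * x = 0 := by linear_combination hx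
      exact ne_zero_of_mem_zeroSumPairs hc h ((mul_eq_zero_iff_left h3).mp this)
    rw [zeroSumPairs_fiber_eq h, hroots, card_ordered_pairs_of_not_all_eq hne]

theorem three_mul_card_sqAddDivValues_add (hc : c ≠ 0) (h3 : (3 : F) ≠ 0) :
    3 * #(sqAddDivValues c) + #(zeroSumPairs c) = 3 * (Fintype.card F - 1) := by
  have hmaps : ∀ q ∈ zeroSumPairs c, q.1 ^ 2 + q.1 * q.2 + q.2 ^ 2 ∈ sqAddDivValues c := by
    rintro ⟨x, y⟩ h
    have hx := ne_zero_of_mem_zeroSumPairs hc h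
    refine mem_image.mpr ⟨x, mem_erase.mpr ⟨hx, mem_univ x⟩, ?_⟩
    rw [← mem_zeroSumPairs.mp h]
    field_simp
    ring
  rw [card_eq_sum_card_fiberwise hmaps, mul_comm, ← smul_eq_mul, ← sum_const, ← sum_add_distrib,
    sum_congr rfl fun b hb => card_zeroSumPairs_value_fiber hc h3 hb, ← mul_sum, sqAddDivValues,
    ← card_eq_sum_card_image, card_erase_of_mem (mem_univ 0), card_univ]

theorem three_mul_card_sqAddDivValues {R : Type*} [CommRing R] [IsDomain R] [DecidableEq R]
    {χ : MulChar F R} (hχ : orderOf χ = 3) (hc : c ≠ 0) :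
    (3 * #(sqAddDivValues c) : ℤ) = 2 * Fintype.card F - 1 - jacobiTrace χ (χ c) := by
  have hcount := three_mul_card_sqAddDivValues_add hc (three_ne_zero_of_orderOf_mulChar hχ)
  rw [card_zeroSumPairs hχ hc] at hcount
  have hcard : 0 < Fintype.card F := Fintype.card_pos
  rw [jacobiTrace]
  omega

end ZeroSumPairs

/-! ### Representations by `x ^ 2 + 3 * y ^ 2` -/

section BinaryQuadraticForm

variable {p : ℕ} {A B T S : ℤ}

theorem exists_eq_mul_add_mul_of_dvd_mul_sub_mul (hp : p.Prime) (hAB : (p : ℤ) = A ^ 2 + 3 * B ^ 2)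
    (hTS : T ^ 2 + 3 * S ^ 2 = 4 * p) (hdvd : (p : ℤ) ∣ T * B - S * A) :
    ∃ n m : ℤ, n ^ 2 + 3 * m ^ 2 = 4 ∧ T = n * A + 3 * m * B := by
  obtain ⟨m, hm⟩ := hdvd
  have hp₀ : (p : ℤ) ≠ 0 := by exact_mod_cast hp.ne_zero
  have hbrahmagupta : (T * A + 3 * S * B) ^ 2 + 3 * (p * m) ^ 2 = 4 * p ^ 2 := by
    rw [← hm]
    linear_combination (A ^ 2 + 3 * B ^ 2) * hTS - 4 * p * hAB
  have hdvd' : (p : ℤ) ∣ T * A + 3 * S * B :=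
    (Nat.prime_iff_prime_int.mp hp).dvd_of_dvd_pow (n := 2)
      ⟨4 * p - 3 * p * m ^ 2, by linear_combination hbrahmagupta⟩
  obtain ⟨n, hn⟩ := hdvd'
  rw [hn] at hbrahmagupta
  refine ⟨n, m, mul_left_cancel₀ (pow_ne_zero 2 hp₀) ?_, mul_left_cancel₀ hp₀ ?_⟩
  · linear_combination hbrahmagupta
  · linear_combination A * hn + 3 * B * hm + T * hAB

theorem exists_eq_mul_add_mul_of_sq_add_three_mul_sq (hp : p.Prime)
    (hAB : (p : ℤ) = A ^ 2 + 3 * B ^ 2) (hTS : T ^ 2 + 3 * S ^ 2 = 4 * p) :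
    ∃ n m : ℤ, n ^ 2 + 3 * m ^ 2 = 4 ∧ T = n * A + 3 * m * B := by
  have hprod : (p : ℤ) ∣ (T * B - S * A) * (T * B - -S * A) :=
    ⟨4 * B ^ 2 - S ^ 2, by linear_combination B ^ 2 * hTS + S ^ 2 * hAB⟩
  rcases (Nat.prime_iff_prime_int.mp hp).dvd_or_dvd hprod with h | h
  · exact exists_eq_mul_add_mul_of_dvd_mul_sub_mul hp hAB hTS h
  · exact exists_eq_mul_add_mul_of_dvd_mul_sub_mul hp hAB (by rwa [neg_sq]) h

theorem eq_of_sq_add_three_mul_sq (hp : p.Prime) (hAB : (p : ℤ) = A ^ 2 + 3 * B ^ 2)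
    (hTS : T ^ 2 + 3 * S ^ 2 = 4 * p) (hA : A % 3 = 1) (hT : T % 3 = 1) :
    T = -2 * A ∨ T = A + 3 * B ∨ T = A - 3 * B := by
  obtain ⟨n, m, hnm, rfl⟩ := exists_eq_mul_add_mul_of_sq_add_three_mul_sq hp hAB hTS
  have hm₁ : -1 ≤ m := by nlinarith
  have hm₂ : m ≤ 1 := by nlinarith
  have hn₁ : -2 ≤ n := by nlinarith
  have hn₂ : n ≤ 2 := by nlinarith
  interval_cases m <;> interval_cases n <;> omega

theorem sq_add_three_mul_sq_modEq_nine (hA : A % 3 = 1) :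
    A ^ 2 + 3 * B ^ 2 ≡ 2 * A - 1 + 3 * B ^ 2 [ZMOD 9] := by
  obtain ⟨k, rfl⟩ : ∃ k, A = 3 * k + 1 := ⟨A / 3, by omega⟩
  exact Int.modEq_iff_dvd.mpr ⟨-k ^ 2, by ring⟩

theorem sq_emod_three_of_not_dvd (hB : ¬3 ∣ B) : B ^ 2 % 3 = 1 := by
  have hcases : B % 3 = 1 ∨ B % 3 = 2 := by omega
  rcases hcases with h | h <;> simp [sq, Int.mul_emod, h]

theorem legendreSym_three_mul_self_modEq (hB : ¬3 ∣ B) :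
    legendreSym 3 B * B ≡ 1 [ZMOD 3] := by
  have heuler := legendreSym.eq_pow 3 B
  rw [show 3 / 2 = 1 from rfl, pow_one] at heuler
  have hsq := sq_emod_three_of_not_dvd hB
  rw [sq] at hsq
  exact (((ZMod.intCast_eq_intCast_iff _ _ 3).mp heuler).mul_right B).trans hsq

end BinaryQuadraticForm

theorem two_ne_zero_of_orderOf_mulChar {p : ℕ} [Fact p.Prime] {R : Type*} [CommRing R]
    {χ : MulChar (ZMod p) R} (hχ : orderOf χ = 3) : (2 : ZMod p) ≠ 0 := by
  have hdvd : 3 ∣ p - 1 := ZMod.card p ▸ hχ ▸ χ.orderOf_dvd_card_sub_one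
  have hp : 2 ≤ p := Nat.Prime.two_le Fact.out
  intro h
  have hle := Nat.le_of_dvd two_pos ((ZMod.natCast_eq_zero_iff 2 p).mp (by exact_mod_cast h))
  omega

/-! ### Evaluation of the trace over `ZMod p` -/

section CubicCharacterOfTwo

variable {p : ℕ} [Fact p.Prime] {K : Type*} [Field K] [DecidableEq K]
  {χ : MulChar (ZMod p) K} {ζ : K} {A B : ℤ} (hχ : orderOf χ = 3)
  (hAB : (p : ℤ) = A ^ 2 + 3 * B ^ 2) (hA : A % 3 = 1)
include hχ hAB hA

theorem jacobiTrace_add_modEq_nine (hζ : ζ ≠ 0) :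
    jacobiTrace χ ζ + 2 * A + 3 * B ^ 2 ≡ if ζ = 1 then 0 else 3 [ZMOD 9] := by
  have hmod := jacobiTrace_modEq_nine hχ hζ
  have hp := sq_add_three_mul_sq_modEq_nine (B := B) hA
  rw [ZMod.card, hAB] at hmod
  rw [Int.ModEq] at hmod hp ⊢
  split_ifs at hmod ⊢ <;> omega

variable [CharZero K]

theorem jacobiTrace_eq_neg_two_mul_or_eq_add_or_eq_sub (hζ : ζ ^ 3 = 1) :
    jacobiTrace χ ζ = -2 * A ∨ jacobiTrace χ ζ = A + 3 * B ∨ jacobiTrace χ ζ = A - 3 * B := by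
  obtain ⟨S, hS⟩ := exists_jacobiTrace_sq_add hχ hζ
  rw [ZMod.card] at hS
  have hζ₀ : ζ ≠ 0 := by
    rintro rfl
    norm_num at hζ
  have hmod := jacobiTrace_add_modEq_nine hχ hAB hA hζ₀
  rw [Int.ModEq] at hmod
  exact eq_of_sq_add_three_mul_sq Fact.out hAB hS hA (by split_ifs at hmod <;> omega)

theorem jacobiTrace_eq_neg_two_mul_iff (hζ : ζ ^ 3 = 1) :
    jacobiTrace χ ζ = -2 * A ↔ ζ = χ 2 := by
  have h2 := two_ne_zero_of_orderOf_mulChar hχ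
  have hodd : Odd (A ^ 2 + 3 * B ^ 2) := by
    have hp : p ≠ 2 := by
      rintro rfl
      exact h2 rfl
    rw [← hAB]
    exact_mod_cast Nat.Prime.odd_of_ne_two Fact.out hp
  have hAB_odd : (A + B) % 2 = 1 := by
    rw [← Int.odd_iff]
    have h3 : ¬Even (3 : ℤ) := by decide
    simpa only [Int.odd_add, Int.odd_pow', Int.even_mul, Int.even_pow' two_ne_zero, ne_eq,
      two_ne_zero, not_false_eq_true, h3, false_or] using hodd
  rw [← even_jacobiTrace_iff hχ h2]
  refine ⟨fun h => h ▸ ⟨-A, by ring⟩, fun heven => ?_⟩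
  have hor := jacobiTrace_eq_neg_two_mul_or_eq_add_or_eq_sub hχ hAB hA hζ
  rw [Int.even_iff] at heven
  omega

omit [DecidableEq K] in
theorem cubicChar_two_eq_one_iff : χ 2 = 1 ↔ 3 ∣ B := by
  classical
  have hmod := jacobiTrace_add_modEq_nine hχ hAB hA (one_ne_zero (α := K))
  have hor := jacobiTrace_eq_neg_two_mul_or_eq_add_or_eq_sub hχ hAB hA (one_pow (M := K) 3)
  have hBsq : 3 ∣ B ^ 2 ↔ 3 ∣ B := Int.prime_three.dvd_pow_iff_dvd two_ne_zero
  rw [if_pos rfl, Int.ModEq] at hmod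
  rw [eq_comm, ← jacobiTrace_eq_neg_two_mul_iff hχ hAB hA (one_pow 3)]
  omega

theorem jacobiTrace_cubicChar_four_of_dvd (hB : 3 ∣ B) : jacobiTrace χ (χ 4) = -2 * A := by
  have htwo := (cubicChar_two_eq_one_iff hχ hAB hA).mpr hB
  have hfour : χ 4 = 1 := by rw [show (4 : ZMod p) = 2 ^ 2 by norm_num, map_pow, htwo, one_pow]
  rw [hfour, jacobiTrace_eq_neg_two_mul_iff hχ hAB hA (one_pow 3), htwo]

theorem jacobiTrace_cubicChar_four_of_not_dvd (hB : ¬3 ∣ B) :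
    jacobiTrace χ (χ 4) = A - 3 * (legendreSym 3 B * B) := by
  have htwo : χ 2 ≠ 1 := (cubicChar_two_eq_one_iff hχ hAB hA).not.mpr hB
  have hfour : χ 4 = χ 2 ^ 2 := by rw [← map_pow]; norm_num
  have h2 := two_ne_zero_of_orderOf_mulChar hχ
  have htwo_pow : χ 2 ^ 3 = 1 := hχ ▸ mulChar_apply_pow_orderOf χ h2
  have htwo₀ : χ 2 ≠ 0 := mulChar_apply_eq_zero_iff.not.mpr h2
  have hfour_pow : χ 4 ^ 3 = 1 := by rw [hfour, pow_right_comm, htwo_pow, one_pow]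
  have hne_one : χ 4 ≠ 1 := fun h => htwo (by rw [← htwo_pow, pow_succ, ← hfour, h, one_mul])
  have hne_two : χ 4 ≠ χ 2 := fun h => htwo (by rwa [hfour, sq, mul_eq_left₀ htwo₀] at h)
  have hmod := jacobiTrace_add_modEq_nine hχ hAB hA (hfour ▸ pow_ne_zero 2 htwo₀)
  rw [if_neg hne_one, Int.ModEq] at hmod
  have hor := jacobiTrace_eq_neg_two_mul_or_eq_add_or_eq_sub hχ hAB hA hfour_pow
  have hne := (jacobiTrace_eq_neg_two_mul_iff hχ hAB hA hfour_pow).not.mpr hne_two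
  have hBsq := sq_emod_three_of_not_dvd hB
  have hlegendre := legendreSym_three_mul_self_modEq hB
  rw [Int.ModEq] at hlegendre
  have hsign : legendreSym 3 B = 1 ∨ legendreSym 3 B = -1 :=
    legendreSym.eq_one_or_neg_one 3 ((ZMod.intCast_zmod_eq_zero_iff_dvd B 3).not.mpr hB)
  rcases hsign with h | h <;> rw [h] at hlegendre ⊢ <;> omega

end CubicCharacterOfTwo

/-! ### Residues and `ZMod` -/

section Residues

variable {n : ℕ} [NeZero n]

theorem card_filter_range_eq_card_filter_zmod {P : ℕ → Prop} [DecidablePred P] {Q : ZMod n → Prop}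
    [DecidablePred Q] (h : ∀ b : ℕ, P b ↔ Q b) : #{b ∈ range n | P b} = #{b | Q b} := by
  refine card_nbij' Nat.cast ZMod.val (fun b hb => ?_) (fun b hb => ?_) (fun b hb => ?_)
    fun b _ => ZMod.natCast_zmod_val b
  · exact mem_filter.mpr ⟨mem_univ _, (h b).mp (mem_filter.mp hb).2⟩
  · refine mem_filter.mpr ⟨mem_range.mpr (ZMod.val_lt b), (h _).mpr ?_⟩
    rw [ZMod.natCast_zmod_val]
    exact (mem_filter.mp hb).2
  · exact ZMod.val_cast_of_lt (mem_range.mp (mem_filter.mp hb).1)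

theorem exists_mem_Icc_iff_exists_zmod {P : ℕ → Prop} {Q : ZMod n → Prop}
    (h : ∀ x : ℕ, P x ↔ Q x) : (∃ x ∈ Icc 1 (n - 1), P x) ↔ ∃ x ≠ 0, Q x := by
  constructor
  · rintro ⟨x, hx, hP⟩
    rw [mem_Icc] at hx
    refine ⟨x, fun h₀ => ?_, (h x).mp hP⟩
    have := Nat.le_of_dvd hx.1 ((ZMod.natCast_eq_zero_iff x n).mp h₀)
    omega
  · rintro ⟨x, hx, hQ⟩
    have hval : x.val ≠ 0 := (ZMod.val_eq_zero x).not.mpr hx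
    have hlt := ZMod.val_lt x
    exact ⟨x.val, mem_Icc.mpr (by omega), (h _).mpr (by rwa [ZMod.natCast_zmod_val])⟩

end Residues

section ValueCounts

variable {p : ℕ} [Fact p.Prime]

theorem card_filter_pow_three_add_modEq_mul {c : ℤ} {c' : ZMod p} (hc : c = c') :
    #((range p).filter fun b : ℕ =>
      ∃ x ∈ Icc 1 (p - 1), (x : ℤ) ^ 3 + c ≡ (b : ℤ) * (x : ℤ) [ZMOD (p : ℤ)]) =
      #(sqAddDivValues c') := by
  rw [card_filter_range_eq_card_filter_zmod (Q := (· ∈ sqAddDivValues c')) fun b => ?_,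
    filter_univ_mem]
  rw [mem_sqAddDivValues]
  refine exists_mem_Icc_iff_exists_zmod fun x => ?_
  rw [← ZMod.intCast_eq_intCast_iff, ← hc]
  push_cast
  rfl

theorem card_filter_pow_three_add_modEq_mul_sq {c : ℤ} {c' : ZMod p} (hc : c = c') :
    #((range p).filter fun b : ℕ =>
      ∃ x ∈ Icc 1 (p - 1), (x : ℤ) ^ 3 + c ≡ (b : ℤ) * (x : ℤ) ^ 2 [ZMOD (p : ℤ)]) =
      #(addDivSqValues c') := by
  rw [card_filter_range_eq_card_filter_zmod (Q := (· ∈ addDivSqValues c')) fun b => ?_,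
    filter_univ_mem]
  rw [mem_addDivSqValues]
  refine exists_mem_Icc_iff_exists_zmod fun x => ?_
  rw [← ZMod.intCast_eq_intCast_iff, ← hc]
  push_cast
  rfl

end ValueCounts

theorem stmt_7 (p : ℕ) (hp : p.Prime) (hp1 : p % 3 = 1)
    (A B : ℤ) (hpAB : (p : ℤ) = A ^ 2 + 3 * B ^ 2) (hA : A % 3 = 1) :
    ((3 : ℤ) ∣ B →
      3 * (((Finset.range p).filter (fun b : ℕ =>
      ∃ x ∈ Finset.Icc 1 (p - 1),
        (x : ℤ) ^ 3 + (4) ≡ (b : ℤ) * (x : ℤ) [ZMOD (p : ℤ)])).card : ℤ) = 2 * (p : ℤ) - 1 + 2 * A ∧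
      3 * (((Finset.range p).filter (fun b : ℕ =>
      ∃ x ∈ Finset.Icc 1 (p - 1),
        (x : ℤ) ^ 3 + (2) ≡ (b : ℤ) * (x : ℤ) ^ 2 [ZMOD (p : ℤ)])).card : ℤ) = 2 * (p : ℤ) - 1 + 2 * A) ∧
    (¬ (3 : ℤ) ∣ B →
      3 * (((Finset.range p).filter (fun b : ℕ =>
      ∃ x ∈ Finset.Icc 1 (p - 1),
        (x : ℤ) ^ 3 + (4) ≡ (b : ℤ) * (x : ℤ) [ZMOD (p : ℤ)])).card : ℤ) = 2 * (p : ℤ) - 1 - A + 3 * legendreSym 3 B * B ∧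
      3 * (((Finset.range p).filter (fun b : ℕ =>
      ∃ x ∈ Finset.Icc 1 (p - 1),
        (x : ℤ) ^ 3 + (2) ≡ (b : ℤ) * (x : ℤ) ^ 2 [ZMOD (p : ℤ)])).card : ℤ) = 2 * (p : ℤ) - 1 - A + 3 * legendreSym 3 B * B) := by
  have : Fact p.Prime := ⟨hp⟩
  have hdvd : 3 ∣ Fintype.card (ZMod p) - 1 := by
    rw [ZMod.card]
    omega
  obtain ⟨χ, hχ⟩ := MulChar.exists_mulChar_orderOf (ZMod p) hdvd
    (Complex.isPrimitiveRoot_exp 3 three_ne_zero)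
  have h2 := two_ne_zero_of_orderOf_mulChar hχ
  have hfour : (2 : ZMod p) ^ 2 = 4 := by norm_num
  have hcount := three_mul_card_sqAddDivValues hχ (pow_ne_zero 2 h2)
  rw [ZMod.card, hfour] at hcount
  rw [card_filter_pow_three_add_modEq_mul (Int.cast_ofNat 4),
    card_filter_pow_three_add_modEq_mul_sq (Int.cast_ofNat 2), card_addDivSqValues h2, hfour,
    and_self, and_self, hcount]
  refine ⟨fun hB => ?_, fun hB => ?_⟩
  · rw [jacobiTrace_cubicChar_four_of_dvd hχ hpAB hA hB]
    ring
  · rw [jacobiTrace_cubicChar_four_of_not_dvd hχ hpAB hA hB]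
    ring
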